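/- (Lemma: differential ε-deflatability implies ε-deflatability.) Let ξ : X → Z be a reaction coordinate with a disintegration family (μ_z), and suppose the system is differentially ε-deflatable with respect to ξ and (μ_z), i.e. (1/|Z|) ∫_Z ∫∫ (∫_X |p(x,y₁)/π(y₁) − p(x,y₂)/π(y₂)| dμ(x)) dμ_z(y₁) dμ_z(y₂) dz ≤ ε. Define p_D : X × Z → [0,∞) by p_D(x,z) := ∫ p(x,y')/π(y') dμ_z(y'). Then the system is ε-deflatable with respect to ξ and p_D, i.e. (1/|Z|) ∫_X (∫_X |p(x,y) − p_D(x,ξ(y))π(y)| dy) dμ(x) ≤ ε. -/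

import Mathlib

open MeasureTheory

open ProbabilityTheory
open scoped ENNReal

/-!
Write `q x y = p x y / π y` and let `μ` be the measure with density `π`. Resampling a point `y`
within its fibre, `y' ∼ μ_{ξ y}`, is a Markov kernel that leaves `μ` invariant, and
`p_D (x, ξ y)` is the mean of `q x` over the resampled point. Hence `|q x y - p_D (x, ξ y)|` is at
most the mean of `|q x y' - q x y|`, and integrating over `x` and `y` and exchanging the integrals
gives the differential deflation error. Invariance makes `y'` again `μ`-distributed, so the
integrability of `q` passes to `(x, y, y') ↦ q x y' - q x y`; this is what justifies the exchange.
-/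

variable {α β γ : Type*} [MeasurableSpace α] [MeasurableSpace β] [MeasurableSpace γ]

section MarkovKernel

variable (β) in
theorem exists_countable_isPiSystem_generateFrom [MeasurableSpace.CountablyGenerated β] :
    ∃ C : Set (Set β), C.Countable ∧ IsPiSystem C ∧
      ‹MeasurableSpace β› = MeasurableSpace.generateFrom C := by
  refine ⟨generateSetAlgebra (MeasurableSpace.countableGeneratingSet β),
    countable_generateSetAlgebra MeasurableSpace.countable_countableGeneratingSet,
    fun s hs t ht _ => isSetAlgebra_generateSetAlgebra.inter_mem hs ht, ?_⟩
  rw [generateFrom_generateSetAlgebra_eq, MeasurableSpace.generateFrom_countableGeneratingSet]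

theorem exists_isMarkovKernel_ae_eq [MeasurableSpace.CountablyGenerated β] [Nonempty β]
    {ρ : Measure α} {ν : α → Measure β} (hprob : ∀ᵐ z ∂ρ, IsProbabilityMeasure (ν z))
    (hν : ∀ s, MeasurableSet s → AEMeasurable (fun z => ν z s) ρ) :
    ∃ κ : Kernel α β, IsMarkovKernel κ ∧ ν =ᵐ[ρ] κ := by
  classical
  obtain ⟨y₀⟩ := ‹Nonempty β›
  obtain ⟨C, hCcount, hCpi, hCgen⟩ := exists_countable_isPiSystem_generateFrom β
  have hCmeas : ∀ s ∈ C, MeasurableSet s := fun s hs =>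
    hCgen ▸ MeasurableSpace.measurableSet_generateFrom hs
  have hgood : ∀ᵐ z ∂ρ, IsProbabilityMeasure (ν z) ∧
      ∀ s, ∀ hs : s ∈ C, ν z s = (hν s (hCmeas s hs)).mk _ z :=
    hprob.and ((ae_ball_iff hCcount).2 fun s hs => (hν s (hCmeas s hs)).ae_eq_mk)
  obtain ⟨G, hGae, hGmeas, hG⟩ := hgood.exists_measurable_mem
  let η : α → Measure β := fun z => if z ∈ G then ν z else Measure.dirac y₀
  have hηprob : ∀ z, IsProbabilityMeasure (η z) := by
    intro z
    by_cases hz : z ∈ G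
    · simpa only [η, if_pos hz] using (hG z hz).1
    · simpa only [η, if_neg hz] using Measure.dirac.isProbabilityMeasure
  have hηmeas : Measurable η := by
    refine Measurable.measure_of_isPiSystem_of_isProbabilityMeasure hCgen hCpi fun s hs => ?_
    have hη : (fun z => η z s) =
        fun z => if z ∈ G then (hν s (hCmeas s hs)).mk _ z else Measure.dirac y₀ s := by
      funext z
      by_cases hz : z ∈ G
      · simpa only [η, if_pos hz] using (hG z hz).2 s hs
      · simp only [η, if_neg hz]
    rw [hη]
    exact Measurable.ite hGmeas (hν s (hCmeas s hs)).measurable_mk measurable_const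
  refine ⟨⟨η, hηmeas⟩, ⟨hηprob⟩, ?_⟩
  filter_upwards [hGae] with z hz
  exact (if_pos hz).symm

theorem abs_sub_integral_le_integral_abs_sub {μ : Measure β} [IsProbabilityMeasure μ]
    {f : β → ℝ} (hf : Integrable f μ) (c : ℝ) : |c - ∫ y, f y ∂μ| ≤ ∫ y, |f y - c| ∂μ :=
  calc |c - ∫ y, f y ∂μ| = |∫ y, (f y - c) ∂μ| := by
        rw [integral_sub hf (integrable_const c), integral_const, probReal_univ, one_smul,
          abs_sub_comm]
    _ ≤ ∫ y, |f y - c| ∂μ := abs_integral_le_integral_abs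

theorem integrable_integral_compProd {ρ : Measure α} [SFinite ρ] {κ : Kernel α β}
    [IsSFiniteKernel κ] {f : α × β → ℝ} (hf : Integrable f (ρ ⊗ₘ κ)) :
    Integrable (fun z => ∫ y, f (z, y) ∂κ z) ρ :=
  Integrable.integral_compProd (κ := Kernel.const Unit ρ) (a := ()) hf

variable {μ : Measure β} [SFinite μ] {τ : Kernel β β} [IsMarkovKernel τ]
  {σ : Measure γ} [SFinite σ] {q : γ → β → ℝ}

theorem measurePreserving_fst_compProd : MeasurePreserving Prod.fst (μ ⊗ₘ τ) μ :=
  ⟨measurable_fst, Measure.fst_compProd μ τ⟩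

theorem measurePreserving_snd_compProd_of_invariant (hτ : τ.Invariant μ) :
    MeasurePreserving Prod.snd (μ ⊗ₘ τ) μ :=
  ⟨measurable_snd, (Measure.snd_compProd μ τ).trans hτ⟩

theorem integrable_sub_compProd_of_invariant (hτ : τ.Invariant μ)
    (hq : Integrable (Function.uncurry q) (σ.prod μ)) :
    Integrable (fun t : γ × β × β => q t.1 t.2.2 - q t.1 t.2.1) (σ.prod (μ ⊗ₘ τ)) :=
  (((MeasurePreserving.id σ).prod
      (measurePreserving_snd_compProd_of_invariant hτ)).integrable_comp_of_integrable hq).sub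
    (((MeasurePreserving.id σ).prod
      measurePreserving_fst_compProd).integrable_comp_of_integrable hq)

theorem integral_abs_sub_integral_kernel_le (hτ : τ.Invariant μ) {f : β → ℝ}
    (hf : Integrable f μ) :
    ∫ y, |f y - ∫ y', f y' ∂τ y| ∂μ ≤ ∫ t, |f t.2 - f t.1| ∂(μ ⊗ₘ τ) := by
  have hsub : Integrable (fun t : β × β => f t.2 - f t.1) (μ ⊗ₘ τ) :=
    ((measurePreserving_snd_compProd_of_invariant hτ).integrable_comp_of_integrable hf).sub
      (measurePreserving_fst_compProd.integrable_comp_of_integrable hf)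
  have hfτ : ∀ᵐ y ∂μ, Integrable f (τ y) :=
    Measure.ae_integrable_of_integrable_comp (hτ.def.symm ▸ hf)
  rw [Measure.integral_compProd hsub.abs]
  refine integral_mono_of_nonneg (ae_of_all _ fun y => abs_nonneg _)
    (integrable_integral_compProd hsub.abs) ?_
  filter_upwards [hfτ] with y hy
  exact abs_sub_integral_le_integral_abs_sub hy (f y)

theorem integral_integral_abs_sub_integral_kernel_le (hτ : τ.Invariant μ)
    (hq : Integrable (Function.uncurry q) (σ.prod μ)) :
    ∫ x, ∫ y, |q x y - ∫ y', q x y' ∂τ y| ∂μ ∂σ ≤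
      ∫ y₂, ∫ y₁, ∫ x, |q x y₁ - q x y₂| ∂σ ∂τ y₂ ∂μ := by
  have hsub := integrable_sub_compProd_of_invariant hτ hq
  calc ∫ x, ∫ y, |q x y - ∫ y', q x y' ∂τ y| ∂μ ∂σ
      ≤ ∫ x, ∫ t, |q x t.2 - q x t.1| ∂(μ ⊗ₘ τ) ∂σ := by
        refine integral_mono_of_nonneg
          (ae_of_all _ fun x => integral_nonneg fun y => abs_nonneg _)
          hsub.abs.integral_prod_left ?_
        filter_upwards [hq.prod_right_ae] with x hqx
        exact integral_abs_sub_integral_kernel_le hτ hqx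
    _ = ∫ t, ∫ x, |q x t.2 - q x t.1| ∂σ ∂(μ ⊗ₘ τ) := integral_integral_swap hsub.abs
    _ = ∫ y₂, ∫ y₁, ∫ x, |q x y₁ - q x y₂| ∂σ ∂τ y₂ ∂μ :=
        Measure.integral_compProd hsub.abs.integral_prod_right

end MarkovKernel

/-- The family `ν` disintegrates `μ` along the fibres of `ξ` with base measure `ρ`. The conditions
on the single measures `ν z` are only required for `ρ`-almost every `z`. Measurability of
`z ↦ ν z s` is not part of the definition: it follows from `integral_integral`. -/
structure IsDisintegration (ν : α → Measure β) (ξ : β → α) (ρ : Measure α) (μ : Measure β) :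
    Prop where
  ae_isProbabilityMeasure : ∀ᵐ z ∂ρ, IsProbabilityMeasure (ν z)
  ae_ae_eq : ∀ᵐ z ∂ρ, ∀ᵐ y ∂ν z, ξ y = z
  integral_integral : ∀ h : β → ℝ, Integrable h μ → ∫ z, ∫ y, h y ∂ν z ∂ρ = ∫ y, h y ∂μ

namespace IsDisintegration

variable {ν : α → Measure β} {ξ : β → α} {ρ : Measure α} {μ : Measure β}

theorem integral_measureReal [IsFiniteMeasure μ] (hν : IsDisintegration ν ξ ρ μ) {s : Set β}
    (hs : MeasurableSet s) : ∫ z, (ν z).real s ∂ρ = μ.real s := by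
  have h := hν.integral_integral (s.indicator 1) ((integrable_const 1).indicator hs)
  simpa only [integral_indicator_one hs] using h

variable [IsProbabilityMeasure μ]

theorem isProbabilityMeasure_base (hν : IsDisintegration ν ξ ρ μ) : IsProbabilityMeasure ρ := by
  have hmass : ρ.real Set.univ = 1 :=
    calc ρ.real Set.univ = ∫ z, (ν z).real Set.univ ∂ρ := by
          rw [integral_congr_ae (g := fun _ => (1 : ℝ))
            (hν.ae_isProbabilityMeasure.mono fun z _ => probReal_univ), integral_const, smul_eq_mul,
            mul_one]
      _ = 1 := by rw [hν.integral_measureReal .univ, probReal_univ]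
  exact ⟨(ENNReal.toReal_eq_one_iff _).1 hmass⟩

theorem aemeasurable_apply (hν : IsDisintegration ν ξ ρ μ) {s : Set β} (hs : MeasurableSet s) :
    AEMeasurable (fun z => ν z s) ρ := by
  -- A function with nonzero Bochner integral is integrable, hence almost everywhere measurable;
  -- a null set is handled through its complement.
  have of_ne_zero : ∀ t, MeasurableSet t → μ.real t ≠ 0 → AEMeasurable (fun z => ν z t) ρ := by
    intro t ht ht0
    have hint : Integrable (fun z => (ν z).real t) ρ :=
      .of_integral_ne_zero (by rwa [hν.integral_measureReal ht])
    refine hint.aemeasurable.ennreal_ofReal.congr ?_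
    filter_upwards [hν.ae_isProbabilityMeasure] with z hz
    exact ofReal_measureReal
  by_cases hs0 : μ.real s = 0
  · have hsc : μ.real sᶜ ≠ 0 := by
      rw [probReal_compl_eq_one_sub hs, hs0, sub_zero]
      exact one_ne_zero
    refine ((of_ne_zero _ hs.compl hsc).const_sub 1).congr ?_
    filter_upwards [hν.ae_isProbabilityMeasure] with z hz
    rw [← prob_compl_eq_one_sub hs.compl, compl_compl]
  · exact of_ne_zero s hs hs0

theorem lintegral_apply (hν : IsDisintegration ν ξ ρ μ) {s : Set β} (hs : MeasurableSet s) :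
    ∫⁻ z, ν z s ∂ρ = μ s := by
  have := hν.isProbabilityMeasure_base
  have hle : ∀ᵐ z ∂ρ, ν z s ≤ 1 := hν.ae_isProbabilityMeasure.mono fun z _ => prob_le_one
  have hfin : ∫⁻ z, ν z s ∂ρ ≠ ∞ :=
    ((lintegral_mono_ae hle).trans_lt (by simp)).ne
  rw [← ENNReal.toReal_eq_toReal_iff' hfin (measure_ne_top μ s), ← measureReal_def μ s,
    ← hν.integral_measureReal hs]
  exact (integral_toReal (hν.aemeasurable_apply hs)
    (hle.mono fun z hz => hz.trans_lt ENNReal.one_lt_top)).symm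

theorem measurePreserving (hν : IsDisintegration ν ξ ρ μ) (hξ : Measurable ξ) :
    MeasurePreserving ξ μ ρ := by
  refine ⟨hξ, Measure.ext fun s hs => ?_⟩
  have hfib : ∀ᵐ z ∂ρ, ν z (ξ ⁻¹' s) = s.indicator 1 z := by
    filter_upwards [hν.ae_isProbabilityMeasure, hν.ae_ae_eq] with z hz hzξ
    by_cases hzs : z ∈ s
    · rw [Set.indicator_of_mem hzs, Pi.one_apply, ← mem_ae_iff_prob_eq_one (hξ hs)]
      filter_upwards [hzξ] with y hy
      simpa only [Set.mem_preimage, hy] using hzs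
    · rw [Set.indicator_of_notMem hzs, measure_eq_zero_iff_ae_notMem]
      filter_upwards [hzξ] with y hy
      simpa only [Set.mem_preimage, hy] using hzs
  rw [Measure.map_apply hξ hs, ← hν.lintegral_apply (hξ hs), lintegral_congr_ae hfib,
    lintegral_indicator_one hs]

theorem invariant_comap (hν : IsDisintegration ν ξ ρ μ) (hξ : Measurable ξ) {κ : Kernel α β}
    (hκ : ν =ᵐ[ρ] κ) : (κ.comap ξ hξ).Invariant μ := by
  refine Measure.ext fun s hs => ?_
  calc μ.bind (κ.comap ξ hξ) s = ∫⁻ y, κ (ξ y) s ∂μ :=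
        Measure.bind_apply hs (κ.comap ξ hξ).aemeasurable
    _ = ∫⁻ z, κ z s ∂ρ := (hν.measurePreserving hξ).lintegral_comp (κ.measurable_coe hs)
    _ = ∫⁻ z, ν z s ∂ρ := lintegral_congr_ae (hκ.mono fun z hz => by simp only [hz])
    _ = μ s := hν.lintegral_apply hs

variable [MeasurableSpace.CountablyGenerated β]

theorem exists_isMarkovKernel (hν : IsDisintegration ν ξ ρ μ) :
    ∃ κ : Kernel α β, IsMarkovKernel κ ∧ ν =ᵐ[ρ] κ :=
  have := nonempty_of_isProbabilityMeasure μ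
  exists_isMarkovKernel_ae_eq hν.ae_isProbabilityMeasure fun _ => hν.aemeasurable_apply

theorem integral_abs_sub_integral_le (hν : IsDisintegration ν ξ ρ μ) (hξ : Measurable ξ)
    {σ : Measure γ} [SFinite σ] {q : γ → β → ℝ}
    (hq : Integrable (Function.uncurry q) (σ.prod μ)) :
    ∫ x, ∫ y, |q x y - ∫ y', q x y' ∂ν (ξ y)| ∂μ ∂σ ≤
      ∫ z, ∫ y₂, ∫ y₁, ∫ x, |q x y₁ - q x y₂| ∂σ ∂ν z ∂ν z ∂ρ := by
  obtain ⟨κ, _, hκ⟩ := hν.exists_isMarkovKernel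
  set τ := κ.comap ξ hξ
  have hτ : τ.Invariant μ := hν.invariant_comap hξ hκ
  have hντ : ∀ᵐ y ∂μ, ν (ξ y) = τ y := (hν.measurePreserving hξ).quasiMeasurePreserving.ae hκ
  have hτν : ∀ᵐ z ∂ρ, ∀ᵐ y ∂ν z, τ y = ν z := by
    filter_upwards [hν.ae_ae_eq, hκ] with z hzξ hz
    filter_upwards [hzξ] with y hy
    rw [hz, Kernel.comap_apply, hy]
  have hosc : Integrable (fun y₂ => ∫ y₁, ∫ x, |q x y₁ - q x y₂| ∂σ ∂τ y₂) μ :=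
    integrable_integral_compProd
      (integrable_sub_compProd_of_invariant hτ hq).abs.integral_prod_right
  calc ∫ x, ∫ y, |q x y - ∫ y', q x y' ∂ν (ξ y)| ∂μ ∂σ
      = ∫ x, ∫ y, |q x y - ∫ y', q x y' ∂τ y| ∂μ ∂σ :=
        integral_congr_ae <| ae_of_all _ fun x =>
          integral_congr_ae <| hντ.mono fun y hy => by simp only [hy]
    _ ≤ ∫ y₂, ∫ y₁, ∫ x, |q x y₁ - q x y₂| ∂σ ∂τ y₂ ∂μ :=
        integral_integral_abs_sub_integral_kernel_le hτ hq
    _ = ∫ z, ∫ y₂, ∫ y₁, ∫ x, |q x y₁ - q x y₂| ∂σ ∂τ y₂ ∂ν z ∂ρ :=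
        (hν.integral_integral _ hosc).symm
    _ = ∫ z, ∫ y₂, ∫ y₁, ∫ x, |q x y₁ - q x y₂| ∂σ ∂ν z ∂ν z ∂ρ :=
        integral_congr_ae <| hτν.mono fun z hz =>
          integral_congr_ae <| hz.mono fun y hy => by simp only [hy]

end IsDisintegration

section Density

variable {m : Measure β} {π : β → ℝ}

theorem integral_withDensity_ofReal (hπ : AEMeasurable π m) (hπ0 : 0 ≤ᵐ[m] π) (f : β → ℝ) :
    ∫ y, f y ∂m.withDensity (fun y => ENNReal.ofReal (π y)) = ∫ y, f y * π y ∂m := by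
  rw [integral_withDensity_eq_integral_toReal_smul₀ hπ.ennreal_ofReal
    (ae_of_all _ fun _ => ENNReal.ofReal_lt_top)]
  refine integral_congr_ae (hπ0.mono fun y hy => ?_)
  simp only [ENNReal.toReal_ofReal hy, smul_eq_mul, mul_comm]

theorem integrable_withDensity_ofReal_iff (hπ : AEMeasurable π m) (hπ0 : 0 ≤ᵐ[m] π) {f : β → ℝ} :
    Integrable f (m.withDensity fun y => ENNReal.ofReal (π y)) ↔
      Integrable (fun y => f y * π y) m := by
  rw [integrable_withDensity_iff_integrable_smul₀' hπ.ennreal_ofReal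
    (ae_of_all _ fun _ => ENNReal.ofReal_lt_top)]
  refine integrable_congr (hπ0.mono fun y hy => ?_)
  simp only [ENNReal.toReal_ofReal hy, smul_eq_mul, mul_comm]

theorem isProbabilityMeasure_withDensity_ofReal (hπ0 : 0 ≤ᵐ[m] π) (hπ1 : ∫ y, π y ∂m = 1) :
    IsProbabilityMeasure (m.withDensity fun y => ENNReal.ofReal (π y)) :=
  ⟨by
    rw [withDensity_apply _ .univ, Measure.restrict_univ, ← ofReal_integral_eq_lintegral_ofReal
      (integrable_of_integral_eq_one hπ1) hπ0, hπ1, ENNReal.ofReal_one]⟩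

theorem isDisintegration_withDensity_ofReal {ν : α → Measure β} {ξ : β → α} {ρ : Measure α}
    (hπ : AEMeasurable π m) (hπ0 : 0 ≤ᵐ[m] π) (hprob : ∀ᵐ z ∂ρ, IsProbabilityMeasure (ν z))
    (hconc : ∀ᵐ z ∂ρ, ∀ᵐ y ∂ν z, ξ y = z)
    (hdis : ∀ h : β → ℝ, Integrable (fun y => h y * π y) m →
      ∫ z, ∫ y, h y ∂ν z ∂ρ = ∫ y, h y * π y ∂m) :
    IsDisintegration ν ξ ρ (m.withDensity fun y => ENNReal.ofReal (π y)) where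
  ae_isProbabilityMeasure := hprob
  ae_ae_eq := hconc
  integral_integral h hh := by
    rw [integral_withDensity_ofReal hπ hπ0]
    exact hdis h ((integrable_withDensity_ofReal_iff hπ hπ0).1 hh)

theorem integral_abs_sub_mul_density (hπ : AEMeasurable π m) (hπpos : ∀ᵐ y ∂m, 0 < π y)
    (f g : β → ℝ) :
    ∫ y, |f y - g y * π y| ∂m =
      ∫ y, |f y / π y - g y| ∂m.withDensity (fun y => ENNReal.ofReal (π y)) := by
  rw [integral_withDensity_ofReal hπ (hπpos.mono fun _ => le_of_lt)]
  refine integral_congr_ae (hπpos.mono fun y hy => ?_)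
  calc |f y - g y * π y| = |(f y / π y - g y) * π y| := by
        rw [sub_mul, div_mul_cancel₀ _ hy.ne']
    _ = |f y / π y - g y| * π y := by rw [abs_mul, abs_of_pos hy]

variable [SFinite m] {p : γ → β → ℝ} {σ : Measure γ}

theorem integrable_uncurry_div_density [SFinite σ] (hπ : AEMeasurable π m)
    (hπpos : ∀ᵐ y ∂m, 0 < π y) (hp : Integrable (Function.uncurry p) (σ.prod m)) :
    Integrable (Function.uncurry fun x y => p x y / π y)
      (σ.prod (m.withDensity fun y => ENNReal.ofReal (π y))) := by
  have hpos : ∀ᵐ t ∂σ.prod m, 0 < π t.2 := Measure.quasiMeasurePreserving_snd.ae hπpos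
  have hπsnd : AEMeasurable (fun t : γ × β => π t.2) (σ.prod m) :=
    hπ.comp_quasiMeasurePreserving Measure.quasiMeasurePreserving_snd
  rw [prod_withDensity_right₀ hπ.ennreal_ofReal,
    integrable_withDensity_ofReal_iff hπsnd (hpos.mono fun _ => le_of_lt)]
  refine hp.congr (hpos.mono fun t ht => ?_)
  exact (div_mul_cancel₀ _ ht.ne').symm

theorem integrable_uncurry_of_integral_eq_one [IsFiniteMeasure σ]
    (hp : Measurable (Function.uncurry p)) (hp0 : ∀ x y, 0 ≤ p x y)
    (hp1 : ∀ᵐ x ∂σ, ∫ y, p x y ∂m = 1) : Integrable (Function.uncurry p) (σ.prod m) := by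
  refine (integrable_prod_iff hp.aestronglyMeasurable).2
    ⟨hp1.mono fun x => integrable_of_integral_eq_one, ?_⟩
  refine (integrable_const (1 : ℝ)).congr (hp1.mono fun x hx => ?_)
  simp only [Function.uncurry, Real.norm_of_nonneg (hp0 x _), hx]

end Density

theorem differentially_deflatable_implies_deflatable_general
    [MeasurableSpace.CountablyGenerated β] {m : Measure β} [SFinite m] {ρ : Measure α}
    {π : β → ℝ} (hπpos : ∀ᵐ y ∂m, 0 < π y) (hπ1 : ∫ y, π y ∂m = 1)
    {ξ : β → α} (hξ : Measurable ξ) {ν : α → Measure β}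
    (hν : IsDisintegration ν ξ ρ (m.withDensity fun y => ENNReal.ofReal (π y)))
    {p : β → β → ℝ} (hp : Integrable (Function.uncurry p)
      ((m.withDensity fun y => ENNReal.ofReal (π y)).prod m)) :
    ∫ x, (∫ y, |p x y - (∫ y', p x y' / π y' ∂ν (ξ y)) * π y| ∂m) * π x ∂m ≤
      ∫ z, ∫ y₂, ∫ y₁, (∫ x, |p x y₁ / π y₁ - p x y₂ / π y₂| * π x ∂m) ∂ν z ∂ν z ∂ρ := by
  have hπ : AEMeasurable π m := (integrable_of_integral_eq_one hπ1).aemeasurable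
  have hπ0 : 0 ≤ᵐ[m] π := hπpos.mono fun _ => le_of_lt
  have := isProbabilityMeasure_withDensity_ofReal hπ0 hπ1
  simp only [integral_abs_sub_mul_density hπ hπpos, ← integral_withDensity_ofReal hπ hπ0]
  exact hν.integral_abs_sub_integral_le hξ (integrable_uncurry_div_density hπ hπpos hp)

/-- (Differential ε-deflatability implies ε-deflatability,
with `p_D(x,z) := ∫ p(x,y')/π(y') dμ_z(y')`.) -/
theorem differentially_deflatable_implies_deflatable
    {n r : ℕ} (X : Set (Fin n → ℝ)) (hX : MeasurableSet X)
    (Z : Set (Fin r → ℝ)) (hZ : MeasurableSet Z)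
    (hZpos : 0 < volume Z) (hZfin : volume Z < ⊤)
    (π : (Fin n → ℝ) → ℝ) (hπmeas : Measurable π) (hπcont : ContinuousOn π X)
    (hπpos : ∀ x ∈ X, 0 < π x) (hπbdd : BddAbove (π '' X))
    (hπprob : ∫ x in X, π x = 1)
    (p : (Fin n → ℝ) → (Fin n → ℝ) → ℝ)
    (hpmeas : Measurable (Function.uncurry p))
    (hpnonneg : ∀ x y, 0 ≤ p x y)
    (hpnorm : ∀ x ∈ X, ∫ y in X, p x y = 1)
    (ξ : (Fin n → ℝ) → Fin r → ℝ) (hξmeas : Measurable ξ) (hξmap : ∀ x ∈ X, ξ x ∈ Z)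
    -- disintegration family (μ_z) for ξ
    (ν : (Fin r → ℝ) → Measure (Fin n → ℝ))
    (hνprob : ∀ z ∈ Z, IsProbabilityMeasure (ν z))
    (hνconc : ∀ z ∈ Z, ν z {x | ξ x ≠ z} = 0)
    (hνdis : ∀ h : (Fin n → ℝ) → ℝ, IntegrableOn (fun x => h x * π x) X →
      ∫ z in Z, ∫ x, h x ∂ν z = ∫ x in X, h x * π x)
    (ε : ℝ) (hε : 0 ≤ ε)
    -- differential ε-deflatability with respect to ξ and (μ_z)
    (hdiff : (volume Z).toReal⁻¹ *
      ∫ z in Z, ∫ y₂, ∫ y₁,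
        (∫ x in X, |p x y₁ / π y₁ - p x y₂ / π y₂| * π x) ∂ν z ∂ν z ≤ ε) :
    -- ε-deflatability with respect to ξ and p_D(x,z) := ∫ p(x,y')/π(y') dμ_z(y')
    (volume Z).toReal⁻¹ *
      ∫ x in X, (∫ y in X, |p x y - (∫ y', p x y' / π y' ∂ν (ξ y)) * π y|) * π x ≤ ε := by
  have hπX : ∀ᵐ x ∂volume.restrict X, 0 < π x := ae_restrict_of_forall_mem hX hπpos
  have hπ0 : 0 ≤ᵐ[volume.restrict X] π := hπX.mono fun _ => le_of_lt
  have := isProbabilityMeasure_withDensity_ofReal hπ0 hπprob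
  have hν : IsDisintegration ν ξ (volume.restrict Z)
      ((volume.restrict X).withDensity fun x => ENNReal.ofReal (π x)) :=
    isDisintegration_withDensity_ofReal hπmeas.aemeasurable hπ0
      (ae_restrict_of_forall_mem hZ hνprob) (ae_restrict_of_forall_mem hZ hνconc) hνdis
  have hp : Integrable (Function.uncurry p)
      (((volume.restrict X).withDensity fun x => ENNReal.ofReal (π x)).prod
        (volume.restrict X)) :=
    integrable_uncurry_of_integral_eq_one hpmeas hpnonneg
      ((withDensity_absolutelyContinuous _ _).ae_le (ae_restrict_of_forall_mem hX hpnorm))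
  refine le_trans ?_ hdiff
  gcongr
  exact differentially_deflatable_implies_deflatable_general hπX hπprob hξmeas hν hp
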